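/- Let 0 ≤ α < 1 and 0 ≤ ν ≤ 1/2, and let (j_n)_{n≥1} be a sequence of real numbers satisfying (n + ν/2 − 1/4)·π ≤ j_n ≤ (n + ν/4 − 1/8)·π for all n ≥ 1. Define λ_n = ((2−α)/2)² · j_n². Then for all n, m ≥ 1 one has |λ_n − λ_m| ≥ (7/64)·π²·(2−α)²·|n² − m²|. -/

import Mathlib

/-!
With `d = 1/8 - ν/4` the hypothesis reads `(n - 2d)π ≤ j_n ≤ (n - d)π`. For `m < n`,
`j_n² - j_m² ≥ ((n - 2d)² - (m - d)²)π² = (n - m - d)(n + m - 3d)π²`, and since `n - m ≥ 1` and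
`n + m ≥ 3` the two factors are at least `(1 - d)(n - m)` and `(1 - d)(n + m)`. The resulting
constant `(1 - d)²` is attained by `j_1 = (1 - d)π`, `j_2 = (2 - 2d)π`.
-/

section ShiftedSquares

variable {d : ℝ}

theorem one_sub_sq_mul_sq_sub_sq_le {x y : ℝ} (hd₀ : 0 ≤ d) (hd₁ : d ≤ 1) (hy : 1 ≤ y)
    (hxy : y + 1 ≤ x) :
    (1 - d) ^ 2 * (x ^ 2 - y ^ 2) ≤ (x - 2 * d) ^ 2 - (y - d) ^ 2 := by
  have hd : 0 ≤ 1 - d := sub_nonneg.2 hd₁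
  have hdiff : (1 - d) * (x - y) ≤ x - y - d := by
    linarith [mul_nonneg hd₀ (by linarith : 0 ≤ x - y - 1)]
  have hsum : (1 - d) * (x + y) ≤ x + y - 3 * d := by
    linarith [mul_nonneg hd₀ (by linarith : 0 ≤ x + y - 3)]
  calc (1 - d) ^ 2 * (x ^ 2 - y ^ 2)
      = ((1 - d) * (x - y)) * ((1 - d) * (x + y)) := by ring
    _ ≤ (x - y - d) * (x + y - 3 * d) :=
        mul_le_mul hdiff hsum (mul_nonneg hd (by linarith)) (by linarith)
    _ = (x - 2 * d) ^ 2 - (y - d) ^ 2 := by ring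

theorem one_sub_sq_mul_sq_sub_sq_le_of_mem_Icc {p x y u v : ℝ} (hd₀ : 0 ≤ d) (hd : d ≤ 2 / 3)
    (hp : 0 ≤ p) (hy : 1 ≤ y) (hxy : y + 1 ≤ x) (hu : (x - 2 * d) * p ≤ u)
    (hv : v ∈ Set.Icc ((y - 2 * d) * p) ((y - d) * p)) :
    (1 - d) ^ 2 * p ^ 2 * (x ^ 2 - y ^ 2) ≤ u ^ 2 - v ^ 2 := by
  have hu_sq : ((x - 2 * d) * p) ^ 2 ≤ u ^ 2 :=
    pow_le_pow_left₀ (mul_nonneg (by linarith) hp) hu 2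
  -- `v` may be negative; `d ≤ 2 / 3` is what makes `-(y - d) ≤ y - 2 * d` for all `y ≥ 1`.
  have hv_neg : -((y - d) * p) ≤ v :=
    calc -((y - d) * p) = -(y - d) * p := by ring
      _ ≤ (y - 2 * d) * p := mul_le_mul_of_nonneg_right (by linarith) hp
      _ ≤ v := hv.1
  have hv_sq : v ^ 2 ≤ ((y - d) * p) ^ 2 := sq_le_sq' hv_neg hv.2
  calc (1 - d) ^ 2 * p ^ 2 * (x ^ 2 - y ^ 2)
      = (1 - d) ^ 2 * (x ^ 2 - y ^ 2) * p ^ 2 := by ring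
    _ ≤ ((x - 2 * d) ^ 2 - (y - d) ^ 2) * p ^ 2 := by
        gcongr
        exact one_sub_sq_mul_sq_sub_sq_le hd₀ (by linarith) hy hxy
    _ = ((x - 2 * d) * p) ^ 2 - ((y - d) * p) ^ 2 := by ring
    _ ≤ u ^ 2 - v ^ 2 := sub_le_sub hu_sq hv_sq

theorem one_sub_sq_mul_abs_sq_sub_sq_le {p : ℝ} {j : ℕ → ℝ} (hd₀ : 0 ≤ d) (hd : d ≤ 2 / 3)
    (hp : 0 ≤ p)
    (hj : ∀ n : ℕ, 1 ≤ n → j n ∈ Set.Icc (((n : ℝ) - 2 * d) * p) (((n : ℝ) - d) * p))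
    {n m : ℕ} (hn : 1 ≤ n) (hm : 1 ≤ m) :
    (1 - d) ^ 2 * p ^ 2 * |(n : ℝ) ^ 2 - (m : ℝ) ^ 2| ≤ |j n ^ 2 - j m ^ 2| := by
  wlog hmn : m < n generalizing n m
  · rcases (not_lt.1 hmn).eq_or_lt with rfl | hnm
    · simp
    · simpa only [abs_sub_comm] using this hm hn hnm
  have hsq : (m : ℝ) ^ 2 ≤ (n : ℝ) ^ 2 := by gcongr
  rw [abs_of_nonneg (sub_nonneg.2 hsq)]
  exact (one_sub_sq_mul_sq_sub_sq_le_of_mem_Icc hd₀ hd hp (by exact_mod_cast hm)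
    (by exact_mod_cast hmn) (hj n hn).1 (hj m hm)).trans (le_abs_self _)

end ShiftedSquares

-- With `d = 1/8 - ν/4`, the bound `-13/6 ≤ ν` is `d ≤ 2/3` and `(7 + 2ν)/16` is `(1 - d)/2`.
theorem eigenvalue_gap_general (α : ℝ) {ν : ℝ} (hν : -13 / 6 ≤ ν) {j lam : ℕ → ℝ}
    (hjlow : ∀ n : ℕ, 1 ≤ n → ((n : ℝ) + ν / 2 - 1 / 4) * Real.pi ≤ j n)
    (hjhigh : ∀ n : ℕ, 1 ≤ n → j n ≤ ((n : ℝ) + ν / 4 - 1 / 8) * Real.pi)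
    (hlam : ∀ n, lam n = ((2 - α) / 2) ^ 2 * j n ^ 2) {n m : ℕ} (hn : 1 ≤ n) (hm : 1 ≤ m) :
    ((7 + 2 * ν) / 16) ^ 2 * Real.pi ^ 2 * (2 - α) ^ 2 * |(n : ℝ) ^ 2 - (m : ℝ) ^ 2| ≤
      |lam n - lam m| := by
  have hν_le : ν ≤ 1 / 2 := by
    linarith [le_of_mul_le_mul_right ((hjlow 1 le_rfl).trans (hjhigh 1 le_rfl)) Real.pi_pos]
  have hj : ∀ k : ℕ, 1 ≤ k → j k ∈ Set.Icc (((k : ℝ) - 2 * (1 / 8 - ν / 4)) * Real.pi)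
      (((k : ℝ) - (1 / 8 - ν / 4)) * Real.pi) := fun k hk =>
    ⟨by linarith [hjlow k hk], by linarith [hjhigh k hk]⟩
  have hgap := one_sub_sq_mul_abs_sq_sub_sq_le (by linarith) (by linarith) Real.pi_pos.le hj hn hm
  calc ((7 + 2 * ν) / 16) ^ 2 * Real.pi ^ 2 * (2 - α) ^ 2 * |(n : ℝ) ^ 2 - (m : ℝ) ^ 2|
      = ((2 - α) / 2) ^ 2 *
          ((1 - (1 / 8 - ν / 4)) ^ 2 * Real.pi ^ 2 * |(n : ℝ) ^ 2 - (m : ℝ) ^ 2|) := by ring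
    _ ≤ ((2 - α) / 2) ^ 2 * |j n ^ 2 - j m ^ 2| := mul_le_mul_of_nonneg_left hgap (sq_nonneg _)
    _ = |lam n - lam m| := by rw [hlam, hlam, ← mul_sub, abs_mul, abs_sq]

/-- Gap property: if `0 ≤ α < 1`, `0 ≤ ν ≤ 1/2`, and `(j_n)_{n≥1}` satisfies
`(n + ν/2 - 1/4)π ≤ j_n ≤ (n + ν/4 - 1/8)π`, then the eigenvalues
`λ_n = ((2-α)/2)² j_n²` satisfy `|λ_n - λ_m| ≥ (7/64)π²(2-α)²|n² - m²|`. -/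
theorem eigenvalue_gap (α ν : ℝ) (hα0 : 0 ≤ α) (hα1 : α < 1)
    (hν0 : 0 ≤ ν) (hν : ν ≤ 1 / 2)
    (j lam : ℕ → ℝ)
    (hjlow : ∀ n : ℕ, 1 ≤ n → ((n : ℝ) + ν / 2 - 1 / 4) * Real.pi ≤ j n)
    (hjhigh : ∀ n : ℕ, 1 ≤ n → j n ≤ ((n : ℝ) + ν / 4 - 1 / 8) * Real.pi)
    (hlam : ∀ n, lam n = ((2 - α) / 2) ^ 2 * j n ^ 2) :
    ∀ n m : ℕ, 1 ≤ n → 1 ≤ m →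
      7 / 64 * Real.pi ^ 2 * (2 - α) ^ 2 * |(n : ℝ) ^ 2 - (m : ℝ) ^ 2| ≤
        |lam n - lam m| := by
  intro n m hn hm
  have hconst : 7 / 64 ≤ ((7 + 2 * ν) / 16) ^ 2 := by nlinarith
  exact le_trans (by gcongr) (eigenvalue_gap_general α (by linarith) hjlow hjhigh hlam hn hm)
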